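/- arXiv:math/0509240 — 2 statements merged into one kernel-verified Lean document; each statement's English description precedes it below -/
import Mathlib

section
/- Let t be a real number with t ≠ −1, and let k ≥ 1 be an integer. Then Σ_{j=1}^{k} (1 − t^j)^2 − Σ_{j=1}^{k−1} (1 − t^j)(1 − t^{j+1}) = (1 − t^k)(1 − t^{k+1})/(1 + t). -/
/-!
The sequence `a j = 1 - t ^ j` satisfies `a (j + 2) + t * a j = (1 + t) * a (j + 1)`. Multiplying
by `a (j + 1)` gives
`(1 + t) * (a (j + 1) ^ 2 - a j * a (j + 1)) = a (j + 1) * a (j + 2) - a j * a (j + 1)`,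
which telescopes. Since `a 0 = 0`, the products `a j * a (j + 1)` may be summed from `j = 1`.
-/

theorem one_add_mul_sum_sq_sub_sum_mul_succ {R : Type*} [CommRing R] {a : ℕ → R} {t : R}
    (ha : ∀ j, a (j + 2) + t * a j = (1 + t) * a (j + 1)) (n : ℕ) :
    (1 + t) * ((∑ j ∈ Finset.range n, a (j + 1) ^ 2) - ∑ j ∈ Finset.range n, a j * a (j + 1)) =
      a n * a (n + 1) - a 0 * a 1 := by
  have telescoping_term (j : ℕ) :
      (1 + t) * (a (j + 1) ^ 2 - a j * a (j + 1)) =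
        a (j + 1) * a (j + 2) - a j * a (j + 1) := by
    linear_combination -a (j + 1) * ha j
  rw [← Finset.sum_sub_distrib, Finset.mul_sum, Finset.sum_congr rfl fun j _ ↦ telescoping_term j]
  exact Finset.sum_range_sub (fun j ↦ a j * a (j + 1)) n

theorem sum_Ico_one_eq_sum_range {M : Type*} [AddCommMonoid M] {f : ℕ → M} (hf : f 0 = 0)
    (n : ℕ) : ∑ j ∈ Finset.Ico 1 n, f j = ∑ j ∈ Finset.range n, f j := by
  obtain rfl | hn := n.eq_zero_or_pos
  · rfl
  · rw [Finset.sum_range_eq_add_Ico f hn, hf, zero_add]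

theorem stmt_8_general {R : Type*} [CommRing R] (t : R) (k : ℕ) :
    ((∑ j ∈ Finset.Icc 1 k, (1 - t ^ j) ^ 2)
      - (∑ j ∈ Finset.Ico 1 k, (1 - t ^ j) * (1 - t ^ (j + 1)))) * (1 + t)
      = (1 - t ^ k) * (1 - t ^ (k + 1)) := by
  have recurrence (j : ℕ) :
      (1 - t ^ (j + 2)) + t * (1 - t ^ j) = (1 + t) * (1 - t ^ (j + 1)) := by
    ring
  have shifted_squares :
      ∑ j ∈ Finset.Icc 1 k, (1 - t ^ j) ^ 2 =
        ∑ j ∈ Finset.range k, (1 - t ^ (j + 1)) ^ 2 := by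
    rw [Finset.range_eq_Ico, Finset.sum_Ico_add' (fun j ↦ (1 - t ^ j) ^ 2), zero_add,
      Finset.Ico_add_one_right_eq_Icc]
  rw [shifted_squares, sum_Ico_one_eq_sum_range (by simp), mul_comm]
  simpa using one_add_mul_sum_sq_sub_sum_mul_succ (a := fun j ↦ 1 - t ^ j) recurrence k

/-- For a real `t ≠ −1` and an integer `k ≥ 1`,
`Σ_{j=1}^{k} (1 − t^j)² − Σ_{j=1}^{k−1} (1 − t^j)(1 − t^{j+1})
  = (1 − t^k)(1 − t^{k+1})/(1 + t)`. -/
theorem stmt_8 (t : ℝ) (ht : t ≠ -1) (k : ℕ) (hk : 1 ≤ k) :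
    (∑ j ∈ Finset.Icc 1 k, (1 - t ^ j) ^ 2)
      - (∑ j ∈ Finset.Icc 1 (k - 1), (1 - t ^ j) * (1 - t ^ (j + 1)))
      = (1 - t ^ k) * (1 - t ^ (k + 1)) / (1 + t) := by
  rw [Finset.Icc_sub_one_right_eq_Ico_of_not_isMin (not_isMin_of_lt hk),
    eq_div_iff fun h ↦ ht (eq_neg_of_add_eq_zero_right h)]
  exact stmt_8_general t k
end

section
/- Let (n; k_1, …, k_n) be one of the five tuples (5; 1,1,1,1,1), (4; 1,1,1,2), (3; 2,2,3), (3; 1,3,4), (3; 1,2,6), and let t > 0 be a real solution of the equation n − 1 − t = Σ_{l=1}^n 1/(1 + t + ⋯ + t^{k_l}). Then the real number 1 does not lie in the ℚ-linear span of the finite set of real numbers { S_{j−1}(t)/S_{k_l}(t) : 1 ≤ l ≤ n, 1 ≤ j ≤ k_l }, where S_m(t) = 1 + t + ⋯ + t^m. -/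
/-!
Let `d` be the sum of the distinct branch lengths (for `(1, 3, 4)` omit `1`, because `S₁ ∣ S₃`).
Multiplying by the common denominator, of degree `d`, turns every component of the character into
the value at `t` of a rational polynomial of degree less than `d`. So if `1` were in the span, `t`
would be a root of a nonzero rational polynomial of degree `d`, and it suffices to see that `t` has
degree at least `d + 1` over `ℚ`.

Clearing denominators in the equation gives a reciprocal polynomial of degree `d + 1`. For
`(1, 1, 1, 1, 1)` it is `X² - 3X + 1`, which is irreducible. In the other cases `u = t + t⁻¹` is a
root of an irreducible trace polynomial `q` of degree `(d + 1) / 2` that has another real root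
`v ∈ (-2, 2)`. If `t` were in `ℚ(u)`, the embedding `u ↦ v` would send `t` to a real number `w`
with `w + w⁻¹ = v`, and then `|v| ≥ 2`. Hence `[ℚ(t) : ℚ(u)] ≥ 2` and `[ℚ(t) : ℚ] ≥ 2 deg q`.
-/

open Polynomial IntermediateField

section GeomSum

variable {R : Type*}

lemma natDegree_geom_sum_X [Semiring R] [Nontrivial R] (n : ℕ) :
    (∑ i ∈ Finset.range (n + 1), (X : R[X]) ^ i).natDegree = n := by
  refine natDegree_eq_of_le_of_coeff_ne_zero ?_ ?_
  · refine natDegree_sum_le_of_forall_le _ _ fun i hi => ?_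
    simpa [Nat.lt_succ_iff] using hi
  · simp [coeff_X_pow]

lemma geom_sum_dvd_geom_sum [CommSemiring R] (x : R) {m n : ℕ} (h : m ∣ n) :
    ∑ i ∈ Finset.range m, x ^ i ∣ ∑ i ∈ Finset.range n, x ^ i := by
  obtain ⟨c, rfl⟩ := h
  induction c with
  | zero => simp
  | succ c ih =>
    simp only [Nat.mul_succ, Finset.sum_range_add, pow_add, ← Finset.mul_sum]
    exact dvd_add ih (dvd_mul_left _ _)

end GeomSum

section Span

variable {F K : Type*} [Field F] [Field K] [Algebra F K] {t : K}

lemma one_notMem_span_of_natDegree_lt_minpoly {s : Set K} {L : F[X]} (hL : L ≠ 0)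
    (hs : ∀ x ∈ s, ∃ P : F[X], P.degree < L.degree ∧ aeval t P = x * aeval t L)
    (hdeg : L.natDegree < (minpoly F t).natDegree) : (1 : K) ∉ Submodule.span F s := by
  have span_le : Submodule.span F s ≤ ((degreeLT F L.natDegree).map (aeval t).toLinearMap).comap
      (LinearMap.mulRight F (aeval t L)) := by
    refine Submodule.span_le.2 fun x hx => ?_
    obtain ⟨P, hP, hPx⟩ := hs x hx
    exact ⟨P, mem_degreeLT.2 (by rwa [← degree_eq_natDegree hL]), hPx⟩
  intro one_mem
  obtain ⟨P, hP, hPL⟩ := span_le one_mem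
  replace hP : P.degree < L.degree := by
    rw [degree_eq_natDegree hL]
    exact mem_degreeLT.1 hP
  have degree_sub : (L - P).degree = L.degree := degree_sub_eq_left_of_degree_lt hP
  have sub_ne_zero : L - P ≠ 0 := degree_ne_bot.1 (degree_sub ▸ degree_ne_bot.2 hL)
  have root : aeval t (L - P) = 0 := by
    simpa [sub_eq_zero] using hPL.symm
  have := natDegree_le_natDegree (minpoly.degree_le_of_ne_zero F t sub_ne_zero root)
  rw [natDegree_eq_of_degree_eq degree_sub] at this
  exact absurd hdeg this.not_gt

lemma one_notMem_span_geom_sum_div {ks : List ℕ} (s : Finset ℕ)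
    (hs : ∀ k ∈ ks, ∃ m ∈ s, k + 1 ∣ m + 1) (hdeg : ∑ m ∈ s, m < (minpoly F t).natDegree) :
    (1 : K) ∉ Submodule.span F {x : K | ∃ k ∈ ks, ∃ j : ℕ, 1 ≤ j ∧ j ≤ k ∧
      x = (∑ i ∈ Finset.range j, t ^ i) / ∑ i ∈ Finset.range (k + 1), t ^ i} := by
  set L : F[X] := ∏ m ∈ s, ∑ i ∈ Finset.range (m + 1), X ^ i with hL_def
  have monic : ∀ m ∈ s, (∑ i ∈ Finset.range (m + 1), (X : F[X]) ^ i).Monic :=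
    fun m _ => monic_geom_sum_X m.succ_ne_zero
  have hL : L ≠ 0 := (monic_prod_of_monic _ _ monic).ne_zero
  have natDegree_L : L.natDegree = ∑ m ∈ s, m := by
    simp only [hL_def, natDegree_prod_of_monic _ _ monic, natDegree_geom_sum_X]
  have hdeg_L : L.natDegree < (minpoly F t).natDegree := natDegree_L ▸ hdeg
  have aeval_L : aeval t L ≠ 0 := fun h =>
    (natDegree_le_natDegree (minpoly.degree_le_of_ne_zero F t hL h)).not_gt hdeg_L
  refine one_notMem_span_of_natDegree_lt_minpoly hL ?_ hdeg_L
  rintro _ ⟨k, hk, j, hj, hjk, rfl⟩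
  obtain ⟨m, hm, hkm⟩ := hs k hk
  obtain ⟨H, hH⟩ : ∑ i ∈ Finset.range (k + 1), X ^ i ∣ L :=
    (geom_sum_dvd_geom_sum X hkm).trans (Finset.dvd_prod_of_mem _ hm)
  obtain ⟨j, rfl⟩ := Nat.exists_eq_add_of_le' hj
  refine ⟨(∑ i ∈ Finset.range (j + 1), X ^ i) * H, ?_, ?_⟩
  · rw [hH] at hL ⊢
    have hH0 : H ≠ 0 := right_ne_zero_of_mul hL
    refine degree_lt_degree ?_
    rw [(monic_geom_sum_X j.succ_ne_zero).natDegree_mul' hH0,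
      (monic_geom_sum_X k.succ_ne_zero).natDegree_mul' hH0, natDegree_geom_sum_X,
      natDegree_geom_sum_X]
    omega
  · have aeval_eq : aeval t L = (∑ i ∈ Finset.range (k + 1), t ^ i) * aeval t H := by
      simp [hH]
    have := left_ne_zero_of_mul (aeval_eq ▸ aeval_L)
    simp only [aeval_eq, map_mul, map_sum, map_pow, aeval_X]
    field_simp

end Span

section Degree

variable {F K : Type*} [Field F] [Field K] [Algebra F K] {t : K}

lemma two_mul_natDegree_minpoly_le_of_notMem_adjoin {u : K} (ht : IsIntegral F t) (hut : u ∈ F⟮t⟯)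
    (htu : t ∉ F⟮u⟯) : 2 * (minpoly F u).natDegree ≤ (minpoly F t).natDegree := by
  have := adjoin.finiteDimensional ht
  have hle : F⟮u⟯ ≤ F⟮t⟯ := adjoin_simple_le_iff.2 hut
  have hu : IsIntegral F u := by
    simpa using (IsIntegral.of_finite F (⟨u, hut⟩ : F⟮t⟯)).map F⟮t⟯.val
  have hne : Module.finrank F F⟮u⟯ ≠ Module.finrank F F⟮t⟯ := fun h =>
    htu (eq_of_le_of_finrank_eq hle h ▸ mem_adjoin_simple_self F t)
  rw [← adjoin.finrank hu, ← adjoin.finrank ht]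
  obtain ⟨c, hc⟩ := finrank_dvd_of_le_right hle
  have c_ne_zero : c ≠ 0 := by
    rintro rfl
    exact Module.finrank_pos.ne' (by simpa using hc)
  have c_ne_one : c ≠ 1 := by
    rintro rfl
    exact hne (by simpa using hc.symm)
  rw [hc, mul_comm]
  exact Nat.mul_le_mul_left _ (by omega)

lemma isIntegral_of_isIntegral_add_inv (ht : t ≠ 0) (h : IsIntegral F (t + t⁻¹)) :
    IsIntegral F t := by
  let u : integralClosure F K := ⟨t + t⁻¹, h⟩
  refine isIntegral_trans (A := integralClosure F K) t ⟨X ^ 2 - C u * X + 1, by monicity!, ?_⟩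
  have hu : algebraMap (integralClosure F K) K u = t + t⁻¹ := rfl
  simp only [eval₂_add, eval₂_sub, eval₂_mul, eval₂_pow, eval₂_X, eval₂_C, eval₂_one, hu]
  field_simp
  ring

lemma notMem_adjoin_add_inv_of_aeval_eq_zero {R : Type*} [Field R] [LinearOrder R]
    [IsStrictOrderedRing R] [Algebra F R] {q : F[X]} (hq : Irreducible q) (ht : t ≠ 0)
    (hu : aeval (t + t⁻¹) q = 0) {v : R} (hv : aeval v q = 0) (hv2 : v ^ 2 < 4) :
    t ∉ F⟮t + t⁻¹⟯ := by
  intro hmem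
  have u_alg : IsAlgebraic F (t + t⁻¹) := ⟨q, hq.ne_zero, hu⟩
  obtain ⟨A, hA⟩ : ∃ A : F[X], aeval (t + t⁻¹) A = t := by
    rwa [← mem_toSubalgebra, adjoin_simple_toSubalgebra_of_isAlgebraic u_alg,
      Algebra.adjoin_singleton_eq_range_aeval] at hmem
  have root_u : aeval (t + t⁻¹) (A ^ 2 - X * A + 1) = 0 := by
    simp only [map_add, map_sub, map_mul, map_pow, map_one, aeval_X, hA]
    field_simp
    ring
  have q_dvd : q ∣ A ^ 2 - X * A + 1 := (minpoly.eq_of_irreducible hq hu ▸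
    dvd_mul_right q _).trans (minpoly.dvd F _ root_u)
  have root_v : (aeval v A) ^ 2 - v * aeval v A + 1 = 0 := by
    simpa using aeval_eq_zero_of_dvd_aeval_eq_zero q_dvd hv
  -- The discriminant `v ^ 2 - 4` of this quadratic equation is negative.
  nlinarith [sq_nonneg (2 * aeval v A - v)]

lemma two_mul_natDegree_le_natDegree_minpoly_of_add_inv [Algebra F ℝ] {q : F[X]}
    (hq : Irreducible q) (ht : t ≠ 0) (hu : aeval (t + t⁻¹) q = 0) {a b : ℝ}
    (ha : a ∈ Set.Ioo (-2) 2) (hb : b ∈ Set.Ioo (-2) 2) (hqa : aeval a q ≤ 0)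
    (hqb : 0 ≤ aeval b q) : 2 * q.natDegree ≤ (minpoly F t).natDegree := by
  obtain ⟨v, ⟨hv, hv'⟩, hqv⟩ : ∃ v ∈ Set.Ioo (-2 : ℝ) 2, aeval v q = 0 :=
    isPreconnected_Ioo.intermediate_value ha hb (f := fun x => aeval x q)
      q.continuous_aeval.continuousOn ⟨hqa, hqb⟩
  have u_integral : IsIntegral F (t + t⁻¹) := isAlgebraic_iff_isIntegral.1 ⟨q, hq.ne_zero, hu⟩
  have u_mem : t + t⁻¹ ∈ F⟮t⟯ :=
    add_mem (mem_adjoin_simple_self F t) (inv_mem (mem_adjoin_simple_self F t))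
  have t_notMem : t ∉ F⟮t + t⁻¹⟯ :=
    notMem_adjoin_add_inv_of_aeval_eq_zero hq ht hu hqv (by nlinarith)
  have natDegree_eq : (minpoly F (t + t⁻¹)).natDegree = q.natDegree := by
    rw [← minpoly.eq_of_irreducible hq hu, natDegree_mul_C]
    exact inv_ne_zero (leadingCoeff_ne_zero.2 hq.ne_zero)
  rw [← natDegree_eq]
  exact two_mul_natDegree_minpoly_le_of_notMem_adjoin
    (isIntegral_of_isIntegral_add_inv ht u_integral) u_mem t_notMem

end Degree

section Irreducible

lemma irreducible_map_rat_of_map_zmod_eq {p : ℕ} [Fact p.Prime] {f : ℤ[X]} {g : (ZMod p)[X]}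
    (hf : f.Monic) (hfg : f.map (Int.castRingHom (ZMod p)) = g) (hg : Irreducible g) :
    Irreducible (f.map (Int.castRingHom ℚ)) :=
  (IsPrimitive.Int.irreducible_iff_irreducible_map_cast hf.isPrimitive).1
    (hf.irreducible_of_irreducible_map _ f (hfg ▸ hg))

lemma irreducible_of_natDegree_le_five {R : Type*} [CommRing R] [IsDomain R] {f : R[X]}
    (hf : f.Monic) (hdeg : f.natDegree ∈ Finset.Icc 1 5) (hroot : ∀ x, ¬ f.IsRoot x)
    (hquad : ∀ g : R[X], g.Monic → g.natDegree = 2 → ¬ g ∣ f) : Irreducible f := by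
  have f_ne_one : f ≠ 1 := by
    rintro rfl
    simp at hdeg
  rw [hf.irreducible_iff_lt_natDegree_lt f_ne_one]
  intro g hg hgdeg hgf
  rw [Finset.mem_Icc] at hdeg
  rw [Finset.mem_Ioc] at hgdeg
  obtain hg1 | hg2 : g.natDegree = 1 ∨ g.natDegree = 2 := by omega
  · rw [hg.eq_X_add_C hg1, ← sub_neg_eq_add, ← C_neg] at hgf
    exact hroot _ (dvd_iff_isRoot.1 hgf)
  · exact hquad g hg hg2 hgf

lemma eq_X_sq_add_X_add_one_of_not_isRoot {g : (ZMod 2)[X]} (hg : g.Monic)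
    (hdeg : g.natDegree = 2) (hroot : ∀ x, ¬ g.IsRoot x) : g = X ^ 2 + X + 1 := by
  have lead : g.coeff 2 = 1 := by
    simpa only [hdeg] using hg.coeff_natDegree
  have expand : g = X ^ 2 + C (g.coeff 1) * X + C (g.coeff 0) := by
    conv_lhs => rw [eq_quadratic_of_degree_le_two (degree_le_of_natDegree_le hdeg.le)]
    simp [lead]
  have coeffs : ∀ b c : ZMod 2, c ≠ 0 → 1 + b + c ≠ 0 → b = 1 ∧ c = 1 := by decide
  have eval_zero : g.coeff 0 ≠ 0 := by
    simpa [coeff_zero_eq_eval_zero] using hroot 0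
  have eval_one : 1 + g.coeff 1 + g.coeff 0 ≠ 0 := by
    have := hroot 1
    rw [expand] at this
    simpa using this
  obtain ⟨hb, hc⟩ := coeffs _ _ eval_zero eval_one
  rw [expand, hb, hc]
  simp

lemma irreducible_zmod_two_of_natDegree_le_five {f : (ZMod 2)[X]} (hf : f.Monic)
    (hdeg : f.natDegree ∈ Finset.Icc 1 5) (hroot : ∀ x, ¬ f.IsRoot x)
    (hquad : ¬ X ^ 2 + X + 1 ∣ f) : Irreducible f := by
  refine irreducible_of_natDegree_le_five hf hdeg hroot fun g hg hg2 hgf => hquad ?_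
  rwa [← eq_X_sq_add_X_add_one_of_not_isRoot hg hg2 fun x hx => hroot x (hx.dvd hgf)]

lemma not_dvd_of_eq_mul_add {R : Type*} [CommRing R] {f g h r : R[X]} (hg : g.Monic)
    (hf : f = g * h + r) (hr : r ≠ 0) (hdeg : r.natDegree < g.natDegree) : ¬ g ∣ f := by
  rw [hf, dvd_add_right (dvd_mul_right g h)]
  exact hg.not_dvd_of_natDegree_lt hr hdeg

lemma natDegree_X_sq_add_X_add_one {R : Type*} [Semiring R] [Nontrivial R] :
    (X ^ 2 + X + 1 : R[X]).natDegree = 2 := by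
  compute_degree!

lemma irreducible_zmod_two_X_sq_add_X_add_one : Irreducible (X ^ 2 + X + 1 : (ZMod 2)[X]) := by
  refine irreducible_of_degree_le_three_of_not_isRoot (by simp [natDegree_X_sq_add_X_add_one]) ?_
  simp only [IsRoot.def, eval_add, eval_pow, eval_X, eval_one]
  decide

lemma irreducible_X_sq_sub_three_mul_X_add_one : Irreducible (X ^ 2 - 3 * X + 1 : ℚ[X]) := by
  have map_eq : (X ^ 2 - 3 * X + 1 : ℤ[X]).map (Int.castRingHom (ZMod 2)) = X ^ 2 + X + 1 := by
    simp only [Polynomial.map_add, Polynomial.map_sub, Polynomial.map_mul, Polynomial.map_pow,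
      Polynomial.map_one, Polynomial.map_ofNat, map_X]
    reduce_mod_char
  simpa using irreducible_map_rat_of_map_zmod_eq (by monicity!) map_eq
    irreducible_zmod_two_X_sq_add_X_add_one

lemma irreducible_trace_quadratic : Irreducible (X ^ 2 - X - 3 : ℚ[X]) := by
  have map_eq : (X ^ 2 - X - 3 : ℤ[X]).map (Int.castRingHom (ZMod 2)) = X ^ 2 + X + 1 := by
    simp only [Polynomial.map_sub, Polynomial.map_pow, Polynomial.map_ofNat, map_X]
    reduce_mod_char
  simpa using irreducible_map_rat_of_map_zmod_eq (by monicity!) map_eq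
    irreducible_zmod_two_X_sq_add_X_add_one

lemma irreducible_trace_cubic : Irreducible (X ^ 3 - 4 * X - 1 : ℚ[X]) := by
  have map_eq : (X ^ 3 - 4 * X - 1 : ℤ[X]).map (Int.castRingHom (ZMod 3)) = X ^ 3 - X - 1 := by
    simp only [Polynomial.map_sub, Polynomial.map_mul, Polynomial.map_pow, Polynomial.map_one,
      Polynomial.map_ofNat, map_X]
    reduce_mod_char
  have natDegree_eq : (X ^ 3 - X - 1 : (ZMod 3)[X]).natDegree = 3 := by compute_degree!
  have irreducible_mod : Irreducible (X ^ 3 - X - 1 : (ZMod 3)[X]) := by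
    refine irreducible_of_degree_le_three_of_not_isRoot (by simp [natDegree_eq]) ?_
    simp only [IsRoot.def, eval_sub, eval_pow, eval_X, eval_one]
    decide
  simpa using irreducible_map_rat_of_map_zmod_eq (by monicity!) map_eq irreducible_mod

lemma irreducible_zmod_two_quartic : Irreducible (X ^ 4 + X + 1 : (ZMod 2)[X]) := by
  have natDegree_eq : (X ^ 4 + X + 1 : (ZMod 2)[X]).natDegree = 4 := by compute_degree!
  have division : (X ^ 4 + X + 1 : (ZMod 2)[X]) = (X ^ 2 + X + 1) * (X ^ 2 + X) + 1 := by
    ring_nf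
    reduce_mod_char
  refine irreducible_zmod_two_of_natDegree_le_five (by monicity!) (by simp [natDegree_eq]) ?_
    (not_dvd_of_eq_mul_add (by monicity!) division one_ne_zero ?_)
  · simp only [IsRoot.def, eval_add, eval_pow, eval_X, eval_one]
    decide
  · simp [natDegree_X_sq_add_X_add_one]

lemma irreducible_trace_quartic : Irreducible (X ^ 4 - 4 * X ^ 2 - X + 1 : ℚ[X]) := by
  have map_eq : (X ^ 4 - 4 * X ^ 2 - X + 1 : ℤ[X]).map (Int.castRingHom (ZMod 2)) =
      X ^ 4 + X + 1 := by
    simp only [Polynomial.map_add, Polynomial.map_sub, Polynomial.map_mul, Polynomial.map_pow,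
      Polynomial.map_one, Polynomial.map_ofNat, map_X]
    reduce_mod_char
  simpa using irreducible_map_rat_of_map_zmod_eq (by monicity!) map_eq irreducible_zmod_two_quartic

lemma irreducible_zmod_two_quintic :
    Irreducible (X ^ 5 + X ^ 4 + X ^ 3 + X ^ 2 + 1 : (ZMod 2)[X]) := by
  have natDegree_eq : (X ^ 5 + X ^ 4 + X ^ 3 + X ^ 2 + 1 : (ZMod 2)[X]).natDegree = 5 := by
    compute_degree!
  have division : (X ^ 5 + X ^ 4 + X ^ 3 + X ^ 2 + 1 : (ZMod 2)[X]) =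
      (X ^ 2 + X + 1) * (X ^ 3 + 1) + X := by
    ring_nf
    reduce_mod_char
  refine irreducible_zmod_two_of_natDegree_le_five (by monicity!) (by simp [natDegree_eq]) ?_
    (not_dvd_of_eq_mul_add (by monicity!) division X_ne_zero ?_)
  · simp only [IsRoot.def, eval_add, eval_pow, eval_X, eval_one]
    decide
  · simp [natDegree_X_sq_add_X_add_one]

lemma irreducible_trace_quintic :
    Irreducible (X ^ 5 + X ^ 4 - 5 * X ^ 3 - 5 * X ^ 2 + 4 * X + 3 : ℚ[X]) := by
  have map_eq : (X ^ 5 + X ^ 4 - 5 * X ^ 3 - 5 * X ^ 2 + 4 * X + 3 : ℤ[X]).map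
      (Int.castRingHom (ZMod 2)) = X ^ 5 + X ^ 4 + X ^ 3 + X ^ 2 + 1 := by
    simp only [Polynomial.map_add, Polynomial.map_sub, Polynomial.map_mul, Polynomial.map_pow,
      Polynomial.map_ofNat, map_X]
    reduce_mod_char
  simpa using irreducible_map_rat_of_map_zmod_eq (by monicity!) map_eq irreducible_zmod_two_quintic

end Irreducible

/-- `t` solves the equation attached to the star-shaped graph with branch lengths `ks`. The
denominators are required not to vanish, so that no term of the sum is a division by zero. -/
structure IsStarSolution {K : Type*} [Field K] (ks : List ℕ) (t : K) : Prop where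
  denom_ne_zero : ∀ k ∈ ks, ∑ i ∈ Finset.range (k + 1), t ^ i ≠ 0
  equation : (ks.length : K) - 1 - t =
    (ks.map fun k => 1 / ∑ i ∈ Finset.range (k + 1), t ^ i).sum

namespace IsStarSolution

variable {K : Type*} [Field K] {t : K}

lemma eq_zero_of_11111 (h : IsStarSolution [1, 1, 1, 1, 1] t) : t ^ 2 - 3 * t + 1 = 0 := by
  have denom₁ : 1 + t ≠ 0 := by
    simpa [Finset.sum_range_succ] using h.denom_ne_zero 1
  have equation : 5 - 1 - t =
      1 / (1 + t) + 1 / (1 + t) + 1 / (1 + t) + 1 / (1 + t) + 1 / (1 + t) := by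
    simpa [Finset.sum_range_succ, add_assoc] using h.equation
  field_simp at equation
  linear_combination -equation

lemma eq_zero_of_1112 (h : IsStarSolution [1, 1, 1, 2] t) :
    t ^ 4 - t ^ 3 - t ^ 2 - t + 1 = 0 := by
  have denom₁ : 1 + t ≠ 0 := by
    simpa [Finset.sum_range_succ] using h.denom_ne_zero 1
  have denom₂ : 1 + t + t ^ 2 ≠ 0 := by
    simpa [Finset.sum_range_succ] using h.denom_ne_zero 2
  have equation : 4 - 1 - t =
      1 / (1 + t) + 1 / (1 + t) + 1 / (1 + t) + 1 / (1 + t + t ^ 2) := by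
    simpa [Finset.sum_range_succ, add_assoc] using h.equation
  field_simp at equation
  linear_combination -equation

lemma eq_zero_of_223 (h : IsStarSolution [2, 2, 3] t) :
    t ^ 6 - t ^ 4 - t ^ 3 - t ^ 2 + 1 = 0 := by
  have denom₂ : 1 + t + t ^ 2 ≠ 0 := by
    simpa [Finset.sum_range_succ] using h.denom_ne_zero 2
  have denom₃ : 1 + t + t ^ 2 + t ^ 3 ≠ 0 := by
    simpa [Finset.sum_range_succ] using h.denom_ne_zero 3
  have equation : 3 - 1 - t =
      1 / (1 + t + t ^ 2) + 1 / (1 + t + t ^ 2) + 1 / (1 + t + t ^ 2 + t ^ 3) := by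
    simpa [Finset.sum_range_succ, add_assoc] using h.equation
  field_simp at equation
  linear_combination -equation

lemma eq_zero_of_134 (h : IsStarSolution [1, 3, 4] t) :
    t ^ 8 - t ^ 5 - t ^ 4 - t ^ 3 + 1 = 0 := by
  have denom₁ : 1 + t ≠ 0 := by
    simpa [Finset.sum_range_succ] using h.denom_ne_zero 1
  have denom₃ : 1 + t + t ^ 2 + t ^ 3 ≠ 0 := by
    simpa [Finset.sum_range_succ] using h.denom_ne_zero 3
  have denom₄ : 1 + t + t ^ 2 + t ^ 3 + t ^ 4 ≠ 0 := by
    simpa [Finset.sum_range_succ] using h.denom_ne_zero 4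
  have equation : 3 - 1 - t =
      1 / (1 + t) + 1 / (1 + t + t ^ 2 + t ^ 3) + 1 / (1 + t + t ^ 2 + t ^ 3 + t ^ 4) := by
    simpa [Finset.sum_range_succ, add_assoc] using h.equation
  field_simp at equation
  refine (mul_eq_zero.1 ?_).resolve_left denom₁
  linear_combination -equation

-- This is the Lehmer polynomial.
lemma eq_zero_of_126 (h : IsStarSolution [1, 2, 6] t) :
    t ^ 10 + t ^ 9 - t ^ 7 - t ^ 6 - t ^ 5 - t ^ 4 - t ^ 3 + t + 1 = 0 := by
  have denom₁ : 1 + t ≠ 0 := by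
    simpa [Finset.sum_range_succ] using h.denom_ne_zero 1
  have denom₂ : 1 + t + t ^ 2 ≠ 0 := by
    simpa [Finset.sum_range_succ] using h.denom_ne_zero 2
  have denom₆ : 1 + t + t ^ 2 + t ^ 3 + t ^ 4 + t ^ 5 + t ^ 6 ≠ 0 := by
    simpa [Finset.sum_range_succ] using h.denom_ne_zero 6
  have equation : 3 - 1 - t =
      1 / (1 + t) + 1 / (1 + t + t ^ 2) + 1 / (1 + t + t ^ 2 + t ^ 3 + t ^ 4 + t ^ 5 + t ^ 6) := by
    simpa [Finset.sum_range_succ, add_assoc] using h.equation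
  field_simp at equation
  linear_combination -equation

lemma ne_zero {ks : List ℕ} (h : IsStarSolution ks t) : t ≠ 0 := by
  rintro rfl
  simpa [Finset.sum_range_succ'] using h.equation

variable [Algebra ℚ K]

lemma two_le_natDegree_minpoly_of_11111 (h : IsStarSolution [1, 1, 1, 1, 1] t) :
    2 ≤ (minpoly ℚ t).natDegree := by
  have root : aeval t (X ^ 2 - 3 * X + 1 : ℚ[X]) = 0 := by
    simpa [map_ofNat] using h.eq_zero_of_11111
  have natDegree_eq : (X ^ 2 - 3 * X + 1 : ℚ[X]).natDegree = 2 := by compute_degree!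
  rw [← minpoly.eq_of_irreducible_of_monic irreducible_X_sq_sub_three_mul_X_add_one root
    (by monicity!), natDegree_eq]

lemma four_le_natDegree_minpoly_of_1112 (h : IsStarSolution [1, 1, 1, 2] t) :
    4 ≤ (minpoly ℚ t).natDegree := by
  have ht := h.ne_zero
  have trace_root : aeval (t + t⁻¹) (X ^ 2 - X - 3 : ℚ[X]) = 0 := by
    simp only [map_sub, map_pow, map_ofNat, aeval_X]
    field_simp
    linear_combination h.eq_zero_of_1112
  have natDegree_eq : (X ^ 2 - X - 3 : ℚ[X]).natDegree = 2 := by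
    compute_degree!
  have := two_mul_natDegree_le_natDegree_minpoly_of_add_inv irreducible_trace_quadratic ht
    trace_root (a := 0) (b := -3 / 2) (by norm_num) (by norm_num) (by norm_num [map_ofNat])
    (by norm_num [map_ofNat])
  omega

lemma six_le_natDegree_minpoly_of_223 (h : IsStarSolution [2, 2, 3] t) :
    6 ≤ (minpoly ℚ t).natDegree := by
  have ht := h.ne_zero
  have trace_root : aeval (t + t⁻¹) (X ^ 3 - 4 * X - 1 : ℚ[X]) = 0 := by
    simp only [map_sub, map_mul, map_pow, map_one, map_ofNat, aeval_X]
    field_simp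
    linear_combination h.eq_zero_of_223
  have natDegree_eq : (X ^ 3 - 4 * X - 1 : ℚ[X]).natDegree = 3 := by
    compute_degree!
  have := two_mul_natDegree_le_natDegree_minpoly_of_add_inv irreducible_trace_cubic ht trace_root
    (a := 0) (b := -1) (by norm_num) (by norm_num) (by norm_num [map_ofNat])
    (by norm_num [map_ofNat])
  omega

lemma eight_le_natDegree_minpoly_of_134 (h : IsStarSolution [1, 3, 4] t) :
    8 ≤ (minpoly ℚ t).natDegree := by
  have ht := h.ne_zero
  have trace_root : aeval (t + t⁻¹) (X ^ 4 - 4 * X ^ 2 - X + 1 : ℚ[X]) = 0 := by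
    simp only [map_add, map_sub, map_mul, map_pow, map_one, map_ofNat, aeval_X]
    field_simp
    linear_combination h.eq_zero_of_134
  have natDegree_eq : (X ^ 4 - 4 * X ^ 2 - X + 1 : ℚ[X]).natDegree = 4 := by
    compute_degree!
  have := two_mul_natDegree_le_natDegree_minpoly_of_add_inv irreducible_trace_quartic ht trace_root
    (a := 1) (b := 0) (by norm_num) (by norm_num) (by norm_num [map_ofNat])
    (by norm_num [map_ofNat])
  omega

lemma ten_le_natDegree_minpoly_of_126 (h : IsStarSolution [1, 2, 6] t) :
    10 ≤ (minpoly ℚ t).natDegree := by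
  have ht := h.ne_zero
  have trace_root :
      aeval (t + t⁻¹) (X ^ 5 + X ^ 4 - 5 * X ^ 3 - 5 * X ^ 2 + 4 * X + 3 : ℚ[X]) = 0 := by
    simp only [map_add, map_sub, map_mul, map_pow, map_ofNat, aeval_X]
    field_simp
    linear_combination h.eq_zero_of_126
  have natDegree_eq :
      (X ^ 5 + X ^ 4 - 5 * X ^ 3 - 5 * X ^ 2 + 4 * X + 3 : ℚ[X]).natDegree = 5 := by
    compute_degree!
  have := two_mul_natDegree_le_natDegree_minpoly_of_add_inv irreducible_trace_quintic ht trace_root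
    (a := -1) (b := 0) (by norm_num) (by norm_num) (by norm_num [map_ofNat])
    (by norm_num [map_ofNat])
  omega

end IsStarSolution

theorem stmt_18_general {K : Type*} [Field K] [Algebra ℚ K] (ks : List ℕ)
    (hks : ks = [1, 1, 1, 1, 1] ∨ ks = [1, 1, 1, 2] ∨ ks = [2, 2, 3] ∨
      ks = [1, 3, 4] ∨ ks = [1, 2, 6])
    (t : K) (ht : IsStarSolution ks t) :
    (1 : K) ∉ Submodule.span ℚ
      {x : K | ∃ kl ∈ ks, ∃ j : ℕ, 1 ≤ j ∧ j ≤ kl ∧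
        x = (∑ i ∈ Finset.range j, t ^ i) / ∑ i ∈ Finset.range (kl + 1), t ^ i} := by
  rcases hks with rfl | rfl | rfl | rfl | rfl
  · exact one_notMem_span_geom_sum_div {1} (by decide) ht.two_le_natDegree_minpoly_of_11111
  · exact one_notMem_span_geom_sum_div {1, 2} (by decide) ht.four_le_natDegree_minpoly_of_1112
  · exact one_notMem_span_geom_sum_div {2, 3} (by decide) ht.six_le_natDegree_minpoly_of_223
  · exact one_notMem_span_geom_sum_div {3, 4} (by decide) ht.eight_le_natDegree_minpoly_of_134
  · exact one_notMem_span_geom_sum_div {1, 2, 6} (by decide) ht.ten_le_natDegree_minpoly_of_126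

/-- For each of the five tuples of branch lengths `(1,1,1,1,1)`, `(1,1,1,2)`,
`(2,2,3)`, `(1,3,4)`, `(1,2,6)` (with `n` the number of branches) and any real solution
`t > 0` of `n − 1 − t = Σ_l 1/S_{k_l}(t)` (where `S_m(t) = 1 + t + ⋯ + t^m`), the number
`1` does not lie in the `ℚ`-linear span of the components
`S_{j−1}(t)/S_{k_l}(t)`, `1 ≤ l ≤ n`, `1 ≤ j ≤ k_l`, of the special character. -/
theorem stmt_18 (ks : List ℕ)
    (hks : ks = [1, 1, 1, 1, 1] ∨ ks = [1, 1, 1, 2] ∨ ks = [2, 2, 3] ∨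
      ks = [1, 3, 4] ∨ ks = [1, 2, 6])
    (t : ℝ) (ht : 0 < t)
    (heq : (ks.length : ℝ) - 1 - t =
      (ks.map fun kl => 1 / ∑ i ∈ Finset.range (kl + 1), t ^ i).sum) :
    (1 : ℝ) ∉ Submodule.span ℚ
      {x : ℝ | ∃ kl ∈ ks, ∃ j : ℕ, 1 ≤ j ∧ j ≤ kl ∧
        x = (∑ i ∈ Finset.range j, t ^ i) / ∑ i ∈ Finset.range (kl + 1), t ^ i} := by
  exact stmt_18_general ks hks t ⟨fun k _ => (geom_sum_pos ht.le k.succ_ne_zero).ne', heq⟩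
end
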